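/- Van der Corput-type decay with scaling: let ν be a measure with ν̂(ξ) = ∫_{[1/2,4]ⁿ} [e^{iξQ₁(t)} − e^{iξQ₂(t)}] η(t₁)⋯η(tₙ) dt where Q₁, Q₂ are polynomials of bounded degree whose coefficients are bounded and such that some partial derivative ∂^α Q₁ and ∂^α Q₂ (1 ≤ |α| ≤ deg) are bounded below on the support. Then there exist C, ε > 0 (depending only on the degree and the lower/upper bounds on the coefficients) such that |ν̂(ξ)| ≤ C|ξ|^{-ε} for all ξ ≠ 0. -/

import Mathlib

open MeasureTheory

/-!
By the triangle inequality it suffices to treat a single smooth phase `φ`. Write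
`exp (i * ξ * φ) = F' ∘ φ` with `‖F‖ ≤ |ξ|⁻¹` and integrate by parts in the direction `j`. Since
`∂φ/∂xⱼ` may vanish, one divides by it only approximately: with `θ s = s / (s² + ρ²)` one has
`1 = s * θ s + (1 + (s / ρ)²)⁻¹`, and for `s = ∂φ/∂xⱼ` the first summand can be integrated by parts
at a cost of order `|ξ|⁻¹ * ρ⁻²`.

The second summand leaves the integral of `(1 + ((∂φ/∂xⱼ) / ρ)²)⁻¹`, which measures the set where
`∂φ/∂xⱼ` is at most of size `ρ`. As `(1 + (s / ρ)²)⁻¹` is the derivative of the small bounded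
function `ρ * arctan (s / ρ)`, this integral is of the form just treated, with phase `∂φ/∂xⱼ`. One
can therefore repeat the argument with one more derivative each time, until reaching the derivative
which is bounded below. Taking for `ρ` the cube root of the small parameter divides the exponent by
`3` at each step, whence the decay `|ξ| ^ (-3⁻ˡ)` for a derivative of order `l`.
-/

section PartialDeriv

variable {ι E : Type*} [DecidableEq ι] [NormedAddCommGroup E] [NormedSpace ℝ E]

/-- The partial derivative `∂f/∂xᵢ` of a function on `ℝ^ι`; like `fderiv`, it takes the junk value
`0` where `f` is not differentiable. -/
noncomputable def partialDeriv (i : ι) (f : (ι → ℝ) → E) (x : ι → ℝ) : E :=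
  fderiv ℝ f x (Pi.single i 1)

/-- The iterated partial derivative of `f` along the coordinates listed in `L`. The head of the list
is differentiated first, as in `L.foldl (fun R i => MvPolynomial.pderiv i R)`. -/
noncomputable def iteratedPartialDeriv (L : List ι) (f : (ι → ℝ) → E) : (ι → ℝ) → E :=
  L.foldl (fun g i => partialDeriv i g) f

theorem contDiff_partialDeriv [Fintype ι] {k m : WithTop ℕ∞} {f : (ι → ℝ) → E} (hf : ContDiff ℝ m f)
    (hkm : k + 1 ≤ m) (i : ι) : ContDiff ℝ k (partialDeriv i f) :=
  (hf.fderiv_right hkm).clm_apply contDiff_const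

theorem partialDeriv_comp [Finite ι] {F : ℝ → E} {φ : (ι → ℝ) → ℝ} {x : ι → ℝ}
    (hF : DifferentiableAt ℝ F (φ x)) (hφ : DifferentiableAt ℝ φ x) (i : ι) :
    partialDeriv i (fun y => F (φ y)) x = partialDeriv i φ x • deriv F (φ x) := by
  cases nonempty_fintype ι
  have h := (hF.hasFDerivAt.comp x hφ.hasFDerivAt).fderiv
  simp only [partialDeriv, Function.comp_def] at h ⊢
  rw [h, ContinuousLinearMap.comp_apply, fderiv_eq_smul_deriv]

theorem partialDeriv_smul [Finite ι] {q : (ι → ℝ) → ℝ} {f : (ι → ℝ) → E} {x : ι → ℝ}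
    (hq : DifferentiableAt ℝ q x) (hf : DifferentiableAt ℝ f x) (i : ι) :
    partialDeriv i (fun y => q y • f y) x =
      q x • partialDeriv i f x + partialDeriv i q x • f x := by
  cases nonempty_fintype ι
  simp [partialDeriv, fderiv_fun_smul hq hf]

theorem partialDeriv_mul [Finite ι] {A : Type*} [NormedCommRing A] [NormedAlgebra ℝ A]
    {f g : (ι → ℝ) → A} {x : ι → ℝ} (hf : DifferentiableAt ℝ f x) (hg : DifferentiableAt ℝ g x)
    (i : ι) :
    partialDeriv i (fun y => f y * g y) x =
      f x * partialDeriv i g x + g x * partialDeriv i f x := by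
  cases nonempty_fintype ι
  simp [partialDeriv, fderiv_fun_mul hf hg]

end PartialDeriv

section Polynomial

open MvPolynomial

variable {ι : Type*}

theorem contDiff_mvPolynomial_eval [Fintype ι] {k : WithTop ℕ∞} (p : MvPolynomial ι ℝ) :
    ContDiff ℝ k fun t : ι → ℝ => eval t p := by
  simp only [eval_eq']
  fun_prop

theorem partialDeriv_mvPolynomial_eval [Finite ι] [DecidableEq ι] (i : ι)
    (p : MvPolynomial ι ℝ) :
    partialDeriv i (fun t => eval t p) = fun t => eval t (pderiv i p) := by
  cases nonempty_fintype ι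
  have hdiff (q : MvPolynomial ι ℝ) (x : ι → ℝ) : DifferentiableAt ℝ (fun t => eval t q) x :=
    (contDiff_mvPolynomial_eval (k := 1) q).differentiable one_ne_zero x
  funext x
  induction p using MvPolynomial.induction_on with
  | C a => simp [partialDeriv]
  | add p q hp hq =>
    simp only [map_add, ← hp, ← hq, partialDeriv, fderiv_fun_add (hdiff p x) (hdiff q x),
      add_apply]
  | mul_X p j hp =>
    have hX : partialDeriv i (fun t : ι → ℝ => t j) x = eval x (pderiv i (X j)) := by
      have h := (hasFDerivAt_apply (𝕜 := ℝ) (F' := fun _ : ι => ℝ) j x).fderiv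
      simp [partialDeriv, h, pderiv_X, Pi.single_apply, apply_ite, eq_comm]
    simp only [map_mul, eval_X, pderiv_mul, map_add,
      partialDeriv_mul (hdiff p x) (differentiableAt_apply j x), hp, hX]
    ring

theorem iteratedPartialDeriv_mvPolynomial_eval [Finite ι] [DecidableEq ι] (L : List ι)
    (p : MvPolynomial ι ℝ) :
    iteratedPartialDeriv L (fun t => eval t p) =
      fun t => eval t (L.foldl (fun R i => pderiv i R) p) := by
  induction L generalizing p with
  | nil => rfl
  | cons i L ih =>
    simpa only [iteratedPartialDeriv, List.foldl_cons, partialDeriv_mvPolynomial_eval]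
      using ih (pderiv i p)

theorem totalDegree_pderiv_le {R : Type*} [CommSemiring R] (i : ι) (p : MvPolynomial ι R) :
    (pderiv i p).totalDegree ≤ p.totalDegree := by
  refine Finset.sup_le fun m hm => ?_
  rw [mem_support_iff, coeff_pderiv] at hm
  have h := le_totalDegree (mem_support_iff.2 (left_ne_zero_of_mul hm))
  rw [Finsupp.sum_add_index' (fun _ => rfl) (fun _ _ _ => rfl)] at h
  exact (Nat.le_add_right _ _).trans h

theorem abs_coeff_pderiv_le {D : ℕ} {M : ℝ} {p : MvPolynomial ι ℝ} (hD : p.totalDegree ≤ D)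
    (hM : ∀ m, |p.coeff m| ≤ M) (i : ι) (m : ι →₀ ℕ) :
    |(pderiv i p).coeff m| ≤ M * D := by
  have hM₀ : 0 ≤ M := (abs_nonneg _).trans (hM 0)
  rw [coeff_pderiv, abs_mul, ← Nat.cast_add_one, Nat.abs_cast]
  rcases eq_or_ne (p.coeff (m + Finsupp.single i 1)) 0 with h | h
  · rw [h, abs_zero, zero_mul]
    positivity
  have hdeg : m i + 1 ≤ D := by
    have hle := le_degreeOf_of_mem_support i (mem_support_iff.2 h)
    rw [Finsupp.add_apply, Finsupp.single_eq_same] at hle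
    exact hle.trans ((degreeOf_le_totalDegree p i).trans hD)
  gcongr
  exact hM _

theorem exists_abs_mvPolynomial_eval_le [Finite ι] {s : Set (ι → ℝ)} (hs : IsCompact s) (D : ℕ)
    (M : ℝ) :
    ∃ B, ∀ p : MvPolynomial ι ℝ, p.totalDegree ≤ D → (∀ m, |p.coeff m| ≤ M) →
      ∀ t ∈ s, |eval t p| ≤ B := by
  cases nonempty_fintype ι
  let S := (Finsupp.finite_of_degree_le (σ := ι) D).toFinset
  obtain ⟨B, hB⟩ := hs.exists_bound_of_continuousOn
    (f := fun t : ι → ℝ => ∑ m ∈ S, |∏ i, t i ^ m i|) (by fun_prop)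
  refine ⟨M * B, fun p hD hM t ht => ?_⟩
  have hM₀ : 0 ≤ M := (abs_nonneg _).trans (hM 0)
  have hsub : p.support ⊆ S := fun m hm => by
    simpa [S, Finsupp.degree_apply, Finsupp.sum] using (le_totalDegree hm).trans hD
  calc |eval t p| ≤ ∑ m ∈ p.support, |p.coeff m * ∏ i, t i ^ m i| := by
        rw [eval_eq']
        exact Finset.abs_sum_le_sum_abs _ _
    _ ≤ ∑ m ∈ p.support, M * |∏ i, t i ^ m i| := by
        gcongr with m
        rw [abs_mul]
        gcongr
        exact hM m
    _ ≤ M * ∑ m ∈ S, |∏ i, t i ^ m i| := by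
        rw [Finset.mul_sum]
        gcongr
    _ ≤ M * B := by
        gcongr
        exact (le_abs_self _).trans (hB t ht)

theorem exists_abs_iteratedPartialDeriv_mvPolynomial_eval_le [Finite ι] [DecidableEq ι]
    {s : Set (ι → ℝ)} (hs : IsCompact s) (D k : ℕ) (M : ℝ) :
    ∃ B, ∀ p : MvPolynomial ι ℝ, p.totalDegree ≤ D → (∀ m, |p.coeff m| ≤ M) →
      ∀ L : List ι, L.length ≤ k →
        ∀ t ∈ s, |iteratedPartialDeriv L (fun t => eval t p) t| ≤ B := by
  induction k generalizing M with
  | zero =>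
    obtain ⟨B, hB⟩ := exists_abs_mvPolynomial_eval_le hs D M
    refine ⟨B, fun p hD hM L hL => ?_⟩
    obtain rfl := List.length_eq_zero_iff.1 (Nat.le_zero.1 hL)
    exact hB p hD hM
  | succ k ih =>
    obtain ⟨B₀, hB₀⟩ := exists_abs_mvPolynomial_eval_le hs D M
    obtain ⟨B₁, hB₁⟩ := ih (M * D)
    refine ⟨max B₀ B₁, fun p hD hM L hL t ht => ?_⟩
    cases L with
    | nil => exact (hB₀ p hD hM t ht).trans (le_max_left _ _)
    | cons i L =>
      have h := hB₁ _ ((totalDegree_pderiv_le i p).trans hD) (abs_coeff_pderiv_le hD hM i) L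
        (Nat.le_of_succ_le_succ hL) t ht
      rw [← partialDeriv_mvPolynomial_eval] at h
      exact h.trans (le_max_right _ _)

end Polynomial

section RegularizedInv

/-- The regularization `s / (s² + ρ²)` of `1 / s` at scale `ρ`: dividing by a derivative which may
vanish is replaced by multiplying by its regularized inverse. -/
noncomputable def regularizedInv (ρ s : ℝ) : ℝ := s / (s ^ 2 + ρ ^ 2)

variable {ρ : ℝ}

theorem mul_regularizedInv_add (hρ : 0 < ρ) (s : ℝ) :
    s * regularizedInv ρ s + (1 + (s / ρ) ^ 2)⁻¹ = 1 := by
  have hweight : (1 + (s / ρ) ^ 2)⁻¹ = ρ ^ 2 / (s ^ 2 + ρ ^ 2) := by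
    rw [inv_eq_iff_eq_inv, inv_div]
    field_simp
    ring
  rw [hweight, regularizedInv]
  field_simp

theorem abs_regularizedInv_le (hρ : 0 < ρ) (s : ℝ) : |regularizedInv ρ s| ≤ (2 * ρ)⁻¹ := by
  have hpos : 0 < s ^ 2 + ρ ^ 2 := by positivity
  rw [regularizedInv, abs_div, abs_of_pos hpos, div_le_iff₀ hpos, inv_mul_eq_div,
    le_div_iff₀ (by positivity)]
  nlinarith [sq_nonneg (|s| - ρ), sq_abs s]

theorem contDiff_regularizedInv (hρ : 0 < ρ) {k : WithTop ℕ∞} :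
    ContDiff ℝ k (regularizedInv ρ) :=
  contDiff_id.div ((contDiff_id.pow 2).add contDiff_const) fun s => by
    have : 0 < s ^ 2 + ρ ^ 2 := by positivity
    exact this.ne'

theorem deriv_regularizedInv (hρ : 0 < ρ) (s : ℝ) :
    deriv (regularizedInv ρ) s = (ρ ^ 2 - s ^ 2) / (s ^ 2 + ρ ^ 2) ^ 2 := by
  have hne : s ^ 2 + ρ ^ 2 ≠ 0 := by positivity
  have hden : HasDerivAt (fun s : ℝ => s ^ 2 + ρ ^ 2) (2 * s) s := by
    simpa using (hasDerivAt_pow 2 s).add_const (ρ ^ 2)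
  refine ((hasDerivAt_id s).div hden hne).deriv.trans ?_
  simp only [id]
  ring

theorem abs_deriv_regularizedInv_le (hρ : 0 < ρ) (s : ℝ) :
    |deriv (regularizedInv ρ) s| ≤ (ρ ^ 2)⁻¹ := by
  have hpos : 0 < s ^ 2 + ρ ^ 2 := by positivity
  have hnum : |ρ ^ 2 - s ^ 2| ≤ s ^ 2 + ρ ^ 2 :=
    abs_le.2 ⟨by linarith [sq_nonneg ρ], by linarith [sq_nonneg s]⟩
  rw [deriv_regularizedInv hρ, abs_div, abs_of_pos (pow_pos hpos 2)]
  calc |ρ ^ 2 - s ^ 2| / (s ^ 2 + ρ ^ 2) ^ 2 ≤ (s ^ 2 + ρ ^ 2) / (s ^ 2 + ρ ^ 2) ^ 2 := by gcongr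
    _ = (s ^ 2 + ρ ^ 2)⁻¹ := by field_simp
    _ ≤ (ρ ^ 2)⁻¹ := by
        gcongr
        linarith [sq_nonneg s]

theorem norm_partialDeriv_regularizedInv_smul_le {ι E : Type*} [Finite ι] [DecidableEq ι]
    [NormedAddCommGroup E] [NormedSpace ℝ E] {σ : (ι → ℝ) → ℝ} {ψ : (ι → ℝ) → E} {x : ι → ℝ}
    {B B₀ B₁ : ℝ} (hρ : 0 < ρ) (hσ : DifferentiableAt ℝ σ x) (hψ : DifferentiableAt ℝ ψ x) (i : ι)
    (hB : |partialDeriv i σ x| ≤ B) (hB₀ : ‖ψ x‖ ≤ B₀) (hB₁ : ‖partialDeriv i ψ x‖ ≤ B₁) :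
    ‖partialDeriv i (fun y => regularizedInv ρ (σ y) • ψ y) x‖ ≤
      (2 * ρ)⁻¹ * B₁ + B * (ρ ^ 2)⁻¹ * B₀ := by
  cases nonempty_fintype ι
  have hB' : 0 ≤ B := (abs_nonneg _).trans hB
  have hθ : DifferentiableAt ℝ (regularizedInv ρ) (σ x) :=
    (contDiff_regularizedInv hρ (k := 1)).differentiable one_ne_zero _
  have hθσ : DifferentiableAt ℝ (fun y => regularizedInv ρ (σ y)) x := hθ.comp x hσ
  rw [partialDeriv_smul hθσ hψ, partialDeriv_comp hθ hσ, smul_eq_mul]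
  refine (norm_add_le _ _).trans ?_
  rw [norm_smul, norm_smul, Real.norm_eq_abs, Real.norm_eq_abs, abs_mul]
  gcongr
  exacts [abs_regularizedInv_le hρ _, abs_deriv_regularizedInv_le hρ _]

end RegularizedInv

theorem hasDerivAt_mul_arctan_div {ρ : ℝ} (hρ : ρ ≠ 0) (s : ℝ) :
    HasDerivAt (fun s => ρ * Real.arctan (s / ρ)) (1 + (s / ρ) ^ 2)⁻¹ s := by
  refine (((hasDerivAt_id s).div_const ρ).arctan.const_mul ρ).congr_deriv ?_
  simp only [id]
  field_simp

theorem norm_mul_arctan_div_le {ρ : ℝ} (hρ : 0 ≤ ρ) (s : ℝ) :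
    ‖ρ * Real.arctan (s / ρ)‖ ≤ 2 * ρ := by
  rw [norm_mul, Real.norm_of_nonneg hρ, mul_comm, Real.norm_eq_abs]
  gcongr
  exact abs_le.2 ⟨by linarith [Real.pi_le_four, Real.neg_pi_div_two_lt_arctan (s / ρ)],
    by linarith [Real.pi_le_four, Real.arctan_lt_pi_div_two (s / ρ)]⟩

theorem norm_cexp_I_mul_ofReal_mul_ofReal (ξ s : ℝ) : ‖Complex.exp (Complex.I * ξ * s)‖ = 1 := by
  rw [mul_assoc, ← Complex.ofReal_mul, Complex.norm_exp_I_mul_ofReal]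

theorem deriv_cexp_I_mul_div {ξ : ℝ} (hξ : ξ ≠ 0) :
    deriv (fun s : ℝ => Complex.exp (Complex.I * ξ * s) / (Complex.I * ξ)) =
      fun s : ℝ => Complex.exp (Complex.I * ξ * s) := by
  have hξ' : Complex.I * ξ ≠ 0 := by simpa using hξ
  funext s
  refine (((hasDerivAt_id s).ofReal_comp.const_mul _).cexp.div_const _).deriv.trans ?_
  simp only [id, Complex.ofReal_one, mul_one]
  exact mul_div_cancel_right₀ _ hξ'

section SetIntegral

variable {α : Type*} [MeasurableSpace α] {μ : Measure α} {s : Set α}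

theorem norm_setIntegral_smul_le_of_norm_le {E : Type*} [NormedAddCommGroup E]
    [NormedSpace ℝ E] {w : α → ℝ} {f : α → E} {B : ℝ} (hs : MeasurableSet s)
    (hw : IntegrableOn w s μ) (hw₀ : ∀ x ∈ s, 0 ≤ w x) (hf : ∀ x ∈ s, ‖f x‖ ≤ B) :
    ‖∫ x in s, w x • f x ∂μ‖ ≤ B * ∫ x in s, w x ∂μ := by
  rw [← integral_const_mul]
  refine norm_integral_le_of_norm_le (hw.const_mul B)
    ((ae_restrict_iff' hs).2 (.of_forall fun x hx => ?_))
  rw [norm_smul, Real.norm_of_nonneg (hw₀ x hx), mul_comm B]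
  exact mul_le_mul_of_nonneg_left (hf x hx) (hw₀ x hx)

theorem setIntegral_inv_one_add_sq_le_of_le_abs {φ : α → ℝ} {c ρ : ℝ} (hs : μ s < ⊤) (hc : 0 < c)
    (hρ₀ : 0 < ρ) (hρ₁ : ρ ≤ 1) (hφ : ∀ x ∈ s, c ≤ |φ x|) :
    ∫ x in s, (1 + (φ x / ρ) ^ 2)⁻¹ ∂μ ≤ (c ^ 2)⁻¹ * μ.real s * ρ := by
  have hpoint (x) (hx : x ∈ s) : ‖(1 + (φ x / ρ) ^ 2)⁻¹‖ ≤ (c ^ 2)⁻¹ * ρ := by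
    rw [Real.norm_of_nonneg (by positivity)]
    calc (1 + (φ x / ρ) ^ 2)⁻¹ ≤ ((c / ρ) ^ 2)⁻¹ := by
          gcongr
          have hsq : (c / ρ) ^ 2 ≤ (φ x / ρ) ^ 2 := by
            rw [← sq_abs (φ x / ρ), abs_div, abs_of_pos hρ₀]
            gcongr
            exact hφ x hx
          linarith
      _ = (c ^ 2)⁻¹ * ρ ^ 2 := by
          field_simp
      _ ≤ (c ^ 2)⁻¹ * ρ := by
          gcongr
          exact pow_le_of_le_one hρ₀.le hρ₁ two_ne_zero
  calc _ ≤ ‖∫ x in s, (1 + (φ x / ρ) ^ 2)⁻¹ ∂μ‖ := Real.le_norm_self _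
    _ ≤ (c ^ 2)⁻¹ * ρ * μ.real s := norm_setIntegral_le_of_norm_le_const hs hpoint
    _ = _ := by ring

theorem norm_setIntegral_cexp_mul_le {φ : α → ℝ} {ψ : α → ℂ} {B₀ : ℝ} (hs : μ s < ⊤)
    (hB₀ : ∀ x ∈ s, ‖ψ x‖ ≤ B₀) (ξ : ℝ) :
    ‖∫ x in s, Complex.exp (Complex.I * ξ * φ x) * ψ x ∂μ‖ ≤ B₀ * μ.real s :=
  norm_setIntegral_le_of_norm_le_const hs fun x hx => by
    rw [norm_mul, norm_cexp_I_mul_ofReal_mul_ofReal, one_mul]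
    exact hB₀ x hx

end SetIntegral

section Box

variable {n : ℕ} {a b : Fin (n + 1) → ℝ}

/-- The surface area of the box `[a, b]`, which bounds the boundary terms of an integration by parts
over the box. -/
noncomputable def boxSurfaceArea (a b : Fin (n + 1) → ℝ) : ℝ :=
  ∑ j : Fin (n + 1), 2 * volume.real (Set.Icc (a ∘ j.succAbove) (b ∘ j.succAbove))

theorem boxSurfaceArea_nonneg : 0 ≤ boxSurfaceArea a b :=
  Finset.sum_nonneg fun _ _ => by positivity

theorem two_mul_volume_face_le_boxSurfaceArea (j : Fin (n + 1)) :
    2 * volume.real (Set.Icc (a ∘ j.succAbove) (b ∘ j.succAbove)) ≤ boxSurfaceArea a b :=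
  Finset.single_le_sum
    (f := fun j : Fin (n + 1) => 2 * volume.real (Set.Icc (a ∘ j.succAbove) (b ∘ j.succAbove)))
    (fun _ _ => by positivity) (Finset.mem_univ j)

theorem setIntegral_Icc_partialDeriv {E : Type*} [NormedAddCommGroup E] [NormedSpace ℝ E]
    (hab : a ≤ b) {w : (Fin (n + 1) → ℝ) → E} (hw : ContDiff ℝ 1 w) (j : Fin (n + 1)) :
    ∫ x in Set.Icc a b, partialDeriv j w x =
      (∫ y in Set.Icc (a ∘ j.succAbove) (b ∘ j.succAbove), w (j.insertNth (b j) y)) -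
        ∫ y in Set.Icc (a ∘ j.succAbove) (b ∘ j.succAbove), w (j.insertNth (a j) y) := by
  let field (i : Fin (n + 1)) : (Fin (n + 1) → ℝ) → E := if i = j then w else 0
  let field' (i : Fin (n + 1)) : (Fin (n + 1) → ℝ) → (Fin (n + 1) → ℝ) →L[ℝ] E :=
    if i = j then fderiv ℝ w else 0
  have hfield (i) (x) : HasFDerivAt (field i) (field' i x) x := by
    simp only [field, field']
    split_ifs
    exacts [(hw.differentiable one_ne_zero x).hasFDerivAt, hasFDerivAt_const 0 x]
  have hdiv (x) : ∑ i, field' i x (Pi.single i 1) = partialDeriv j w x := by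
    rw [Finset.sum_eq_single j (fun i _ hij => by simp [field', hij]) (by simp)]
    simp [field', partialDeriv]
  have key := integral_divergence_of_hasFDerivAt_off_countable' a b hab field field' ∅
    Set.countable_empty (fun i x _ => (hfield i x).continuousAt.continuousWithinAt)
    (fun x _ i => hfield i x) (by
      simp only [hdiv]
      exact (contDiff_partialDeriv hw (zero_add 1).le j).continuous.integrableOn_Icc)
  simp only [hdiv] at key
  rw [key, Finset.sum_eq_single j (fun i _ hij => by simp [field, hij]) (by simp)]
  simp [field]

theorem norm_setIntegral_Icc_partialDeriv_le {E : Type*} [NormedAddCommGroup E] [NormedSpace ℝ E]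
    (hab : a ≤ b) {w : (Fin (n + 1) → ℝ) → E} (hw : ContDiff ℝ 1 w) {G : ℝ}
    (hG : ∀ x ∈ Set.Icc a b, ‖w x‖ ≤ G) (j : Fin (n + 1)) :
    ‖∫ x in Set.Icc a b, partialDeriv j w x‖ ≤ G * boxSurfaceArea a b := by
  have hG₀ : 0 ≤ G := (norm_nonneg _).trans (hG a (Set.left_mem_Icc.2 hab))
  set face := Set.Icc (a ∘ j.succAbove) (b ∘ j.succAbove)
  have hface (c : ℝ) (hc : c ∈ Set.Icc (a j) (b j)) :
      ‖∫ y in face, w (j.insertNth c y)‖ ≤ G * volume.real face :=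
    norm_setIntegral_le_of_norm_le_const isCompact_Icc.measure_lt_top fun y hy =>
      hG _ (Fin.insertNth_mem_Icc.2 ⟨hc, hy⟩)
  rw [setIntegral_Icc_partialDeriv hab hw]
  calc _ ≤ ‖∫ y in face, w (j.insertNth (b j) y)‖ + ‖∫ y in face, w (j.insertNth (a j) y)‖ :=
        norm_sub_le _ _
    _ ≤ G * volume.real face + G * volume.real face :=
        add_le_add (hface _ (Set.right_mem_Icc.2 (hab j))) (hface _ (Set.left_mem_Icc.2 (hab j)))
    _ = G * (2 * volume.real face) := by ring
    _ ≤ G * boxSurfaceArea a b := by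
        gcongr
        exact two_mul_volume_face_le_boxSurfaceArea j

variable {𝕜 : Type*} [RCLike 𝕜] {φ : (Fin (n + 1) → ℝ) → ℝ} {F : ℝ → 𝕜}
  {g ψ : (Fin (n + 1) → ℝ) → 𝕜}

theorem norm_setIntegral_partialDeriv_smul_deriv_comp_mul_le (hab : a ≤ b) (hφ : ContDiff ℝ 1 φ)
    (hF : ContDiff ℝ 1 F) (hg : ContDiff ℝ 1 g) (j : Fin (n + 1)) {H G G' : ℝ}
    (hH : ∀ s, ‖F s‖ ≤ H) (hG : ∀ x ∈ Set.Icc a b, ‖g x‖ ≤ G)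
    (hG' : ∀ x ∈ Set.Icc a b, ‖partialDeriv j g x‖ ≤ G') :
    ‖∫ x in Set.Icc a b, partialDeriv j φ x • (deriv F (φ x) * g x)‖ ≤
      H * (G * boxSurfaceArea a b + G' * volume.real (Set.Icc a b)) := by
  have hH₀ : 0 ≤ H := (norm_nonneg _).trans (hH 0)
  have hFφ : ContDiff ℝ 1 fun x => F (φ x) := hF.comp hφ
  have hw : ContDiff ℝ 1 fun x => F (φ x) * g x := hFφ.mul hg
  have hbyparts (x) : partialDeriv j φ x • (deriv F (φ x) * g x) =
      partialDeriv j (fun x => F (φ x) * g x) x - F (φ x) * partialDeriv j g x := by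
    rw [partialDeriv_mul (hFφ.differentiable one_ne_zero x) (hg.differentiable one_ne_zero x),
      partialDeriv_comp (hF.differentiable one_ne_zero _) (hφ.differentiable one_ne_zero x),
      add_sub_cancel_left, mul_smul_comm, mul_comm (g x)]
  have hboundary : ‖∫ x in Set.Icc a b, partialDeriv j (fun x => F (φ x) * g x) x‖ ≤
      H * G * boxSurfaceArea a b :=
    norm_setIntegral_Icc_partialDeriv_le hab hw (fun x hx => by
      rw [norm_mul]
      gcongr
      exacts [hH _, hG x hx]) j
  have hinterior : ‖∫ x in Set.Icc a b, F (φ x) * partialDeriv j g x‖ ≤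
      H * G' * volume.real (Set.Icc a b) :=
    norm_setIntegral_le_of_norm_le_const isCompact_Icc.measure_lt_top fun x hx => by
      rw [norm_mul]
      gcongr
      exacts [hH _, hG' x hx]
  have hg' := contDiff_partialDeriv hg (zero_add 1).le j
  simp only [hbyparts]
  rw [integral_sub (contDiff_partialDeriv hw (zero_add 1).le j).continuous.integrableOn_Icc
    (hFφ.continuous.fun_mul hg'.continuous).integrableOn_Icc]
  calc _ ≤ H * G * boxSurfaceArea a b + H * G' * volume.real (Set.Icc a b) :=
        (norm_sub_le _ _).trans (add_le_add hboundary hinterior)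
    _ = _ := by ring

theorem norm_setIntegral_deriv_comp_mul_le (hab : a ≤ b) (hφ : ContDiff ℝ 2 φ)
    (hF : ContDiff ℝ 1 F) (hψ : ContDiff ℝ 1 ψ) (j : Fin (n + 1)) {H B B₀ B₁ ρ : ℝ}
    (hH : ∀ s, ‖F s‖ ≤ H) (hF' : ∀ s, ‖deriv F s‖ ≤ 1)
    (hB : ∀ x ∈ Set.Icc a b, |partialDeriv j (partialDeriv j φ) x| ≤ B)
    (hB₀ : ∀ x ∈ Set.Icc a b, ‖ψ x‖ ≤ B₀) (hB₁ : ∀ x ∈ Set.Icc a b, ‖partialDeriv j ψ x‖ ≤ B₁)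
    (hρ : 0 < ρ) :
    ‖∫ x in Set.Icc a b, deriv F (φ x) * ψ x‖ ≤
      H * ((2 * ρ)⁻¹ * B₀ * boxSurfaceArea a b +
        ((2 * ρ)⁻¹ * B₁ + B * (ρ ^ 2)⁻¹ * B₀) * volume.real (Set.Icc a b)) +
      B₀ * ∫ x in Set.Icc a b, (1 + (partialDeriv j φ x / ρ) ^ 2)⁻¹ := by
  set σ := partialDeriv j φ
  have hσ : ContDiff ℝ 1 σ := contDiff_partialDeriv hφ one_add_one_eq_two.le j
  have hg : ContDiff ℝ 1 fun x => regularizedInv ρ (σ x) • ψ x :=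
    ((contDiff_regularizedInv hρ).fun_comp hσ).fun_smul hψ
  have hweight_pos (x) : 0 < 1 + (σ x / ρ) ^ 2 := by positivity
  have hweight : Continuous fun x => (1 + (σ x / ρ) ^ 2)⁻¹ :=
    (by fun_prop : Continuous fun x => 1 + (σ x / ρ) ^ 2).inv₀ fun x => (hweight_pos x).ne'
  have hF'φ : Continuous fun x => deriv F (φ x) := (hF.continuous_deriv le_rfl).comp hφ.continuous
  have hsplit (x) : deriv F (φ x) * ψ x =
      σ x • (deriv F (φ x) * regularizedInv ρ (σ x) • ψ x) +
        (1 + (σ x / ρ) ^ 2)⁻¹ • (deriv F (φ x) * ψ x) := by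
    rw [mul_smul_comm, smul_smul, ← add_smul, mul_regularizedInv_add hρ, one_smul]
  have hnonstationary :=
    norm_setIntegral_partialDeriv_smul_deriv_comp_mul_le hab (hφ.of_le one_le_two) hF hg j hH
      (G := (2 * ρ)⁻¹ * B₀) (fun x hx => by
        rw [norm_smul]
        gcongr
        exacts [abs_regularizedInv_le hρ _, hB₀ x hx])
      fun x hx => norm_partialDeriv_regularizedInv_smul_le hρ (hσ.differentiable one_ne_zero x)
        (hψ.differentiable one_ne_zero x) j (hB x hx) (hB₀ x hx) (hB₁ x hx)
  have hstationary : ‖∫ x in Set.Icc a b, (1 + (σ x / ρ) ^ 2)⁻¹ • (deriv F (φ x) * ψ x)‖ ≤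
      B₀ * ∫ x in Set.Icc a b, (1 + (σ x / ρ) ^ 2)⁻¹ :=
    norm_setIntegral_smul_le_of_norm_le measurableSet_Icc hweight.integrableOn_Icc
      (fun x _ => inv_nonneg.2 (hweight_pos x).le) fun x hx => by
        rw [norm_mul]
        exact (mul_le_of_le_one_left (norm_nonneg _) (hF' _)).trans (hB₀ x hx)
  rw [funext hsplit, integral_add
    (hσ.continuous.fun_smul (hF'φ.fun_mul hg.continuous)).integrableOn_Icc
    (hweight.fun_smul (hF'φ.fun_mul hψ.continuous)).integrableOn_Icc]
  exact (norm_add_le _ _).trans (add_le_add hnonstationary hstationary)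

theorem norm_setIntegral_deriv_comp_mul_le_mul_rpow (hab : a ≤ b) (hφ : ContDiff ℝ 2 φ)
    (hF : ContDiff ℝ 1 F) (hψ : ContDiff ℝ 1 ψ) (j : Fin (n + 1)) {ρ κ K B B₀ B₁ : ℝ}
    (hρ₀ : 0 < ρ) (hρ₁ : ρ ≤ 1) (hκ : κ ≤ 1)
    (hFρ : ∀ s, ‖F s‖ ≤ 2 * ρ ^ 3) (hF' : ∀ s, ‖deriv F s‖ ≤ 1)
    (hB : ∀ x ∈ Set.Icc a b, |partialDeriv j (partialDeriv j φ) x| ≤ B)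
    (hB₀ : ∀ x ∈ Set.Icc a b, ‖ψ x‖ ≤ B₀) (hB₁ : ∀ x ∈ Set.Icc a b, ‖partialDeriv j ψ x‖ ≤ B₁)
    (hK : ∫ x in Set.Icc a b, (1 + (partialDeriv j φ x / ρ) ^ 2)⁻¹ ≤ K * ρ ^ κ) :
    ‖∫ x in Set.Icc a b, deriv F (φ x) * ψ x‖ ≤
      (B₀ * boxSurfaceArea a b + (B₁ + 2 * B * B₀) * volume.real (Set.Icc a b) + B₀ * K) *
        ρ ^ κ := by
  have ha : a ∈ Set.Icc a b := Set.left_mem_Icc.2 hab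
  have hB_nonneg : 0 ≤ B := (abs_nonneg _).trans (hB a ha)
  have hB₀_nonneg : 0 ≤ B₀ := (norm_nonneg _).trans (hB₀ a ha)
  have hB₁_nonneg : 0 ≤ B₁ := (norm_nonneg _).trans (hB₁ a ha)
  have hS := boxSurfaceArea_nonneg (a := a) (b := b)
  have hρ_le : ρ ≤ ρ ^ κ := by
    simpa using Real.rpow_le_rpow_of_exponent_ge hρ₀ hρ₁ hκ
  have hρ_sq_le : ρ ^ 2 ≤ ρ ^ κ := (pow_le_of_le_one hρ₀.le hρ₁ two_ne_zero).trans hρ_le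
  set V := volume.real (Set.Icc a b)
  calc ‖∫ x in Set.Icc a b, deriv F (φ x) * ψ x‖
      ≤ 2 * ρ ^ 3 * ((2 * ρ)⁻¹ * B₀ * boxSurfaceArea a b +
          ((2 * ρ)⁻¹ * B₁ + B * (ρ ^ 2)⁻¹ * B₀) * V) +
        B₀ * ∫ x in Set.Icc a b, (1 + (partialDeriv j φ x / ρ) ^ 2)⁻¹ :=
        norm_setIntegral_deriv_comp_mul_le hab hφ hF hψ j hFρ hF' hB hB₀ hB₁ hρ₀
    _ = (B₀ * boxSurfaceArea a b + B₁ * V) * ρ ^ 2 + 2 * B * B₀ * V * ρ +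
        B₀ * ∫ x in Set.Icc a b, (1 + (partialDeriv j φ x / ρ) ^ 2)⁻¹ := by
        congr 1
        field_simp
        ring
    _ ≤ (B₀ * boxSurfaceArea a b + B₁ * V) * ρ ^ κ + 2 * B * B₀ * V * ρ ^ κ +
        B₀ * (K * ρ ^ κ) := by
        gcongr
    _ = _ := by ring

theorem norm_setIntegral_deriv_comp_mul_le_mul_rpow_div_three (hab : a ≤ b) (hφ : ContDiff ℝ 2 φ)
    (hF : ContDiff ℝ 1 F) (hψ : ContDiff ℝ 1 ψ) (j : Fin (n + 1)) {h κ K B B₀ B₁ : ℝ}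
    (hh₀ : 0 < h) (hh₁ : h ≤ 1) (hκ : κ ≤ 1)
    (hFh : ∀ s, ‖F s‖ ≤ 2 * h) (hF' : ∀ s, ‖deriv F s‖ ≤ 1)
    (hB : ∀ x ∈ Set.Icc a b, |partialDeriv j (partialDeriv j φ) x| ≤ B)
    (hB₀ : ∀ x ∈ Set.Icc a b, ‖ψ x‖ ≤ B₀) (hB₁ : ∀ x ∈ Set.Icc a b, ‖partialDeriv j ψ x‖ ≤ B₁)
    (hK : ∀ ρ : ℝ, 0 < ρ → ρ ≤ 1 →
      ∫ x in Set.Icc a b, (1 + (partialDeriv j φ x / ρ) ^ 2)⁻¹ ≤ K * ρ ^ κ) :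
    ‖∫ x in Set.Icc a b, deriv F (φ x) * ψ x‖ ≤
      (B₀ * boxSurfaceArea a b + (B₁ + 2 * B * B₀) * volume.real (Set.Icc a b) + B₀ * K) *
        h ^ (κ / 3) := by
  -- At this scale the integration by parts, which costs `h / ρ ^ 2`, gains a factor `ρ`.
  set ρ := h ^ (1 / 3 : ℝ) with hρ_def
  have hρ₀ : 0 < ρ := Real.rpow_pos_of_pos hh₀ _
  have hρ₁ : ρ ≤ 1 := Real.rpow_le_one hh₀.le hh₁ (by norm_num)
  have hρ_cube : ρ ^ 3 = h := by
    rw [hρ_def, ← Real.rpow_mul_natCast hh₀.le]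
    norm_num
  have hρ_rpow : ρ ^ κ = h ^ (κ / 3) := by
    rw [hρ_def, ← Real.rpow_mul hh₀.le, one_div_mul_eq_div]
  rw [← hρ_cube] at hFh
  rw [← hρ_rpow]
  exact norm_setIntegral_deriv_comp_mul_le_mul_rpow hab hφ hF hψ j hρ₀ hρ₁ hκ hFh hF' hB hB₀ hB₁
    (hK ρ hρ₀ hρ₁)

theorem setIntegral_inv_one_add_sq_le (hab : a ≤ b) {B c ρ : ℝ} (hc : 0 < c)
    (L : List (Fin (n + 1))) (hφ : ContDiff ℝ (L.length + 1) φ)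
    (hB : ∀ L' : List (Fin (n + 1)), L'.length ≤ L.length + 1 → ∀ x ∈ Set.Icc a b,
      |iteratedPartialDeriv L' φ x| ≤ B)
    (hL : ∀ x ∈ Set.Icc a b, c ≤ |iteratedPartialDeriv L φ x|) (hρ₀ : 0 < ρ) (hρ₁ : ρ ≤ 1) :
    ∫ x in Set.Icc a b, (1 + (φ x / ρ) ^ 2)⁻¹ ≤
      ((c ^ 2)⁻¹ * volume.real (Set.Icc a b) +
        L.length * (boxSurfaceArea a b + 2 * B * volume.real (Set.Icc a b))) *
          ρ ^ ((1 / 3 : ℝ) ^ L.length) := by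
  induction L generalizing φ ρ with
  | nil =>
    simpa [iteratedPartialDeriv] using
      setIntegral_inv_one_add_sq_le_of_le_abs (φ := φ)
        isCompact_Icc.measure_lt_top hc hρ₀ hρ₁ hL
  | cons j L ih =>
    have hF' : deriv (fun s => ρ * Real.arctan (s / ρ)) = fun s => (1 + (s / ρ) ^ 2)⁻¹ :=
      funext fun s => (hasDerivAt_mul_arctan_div hρ₀.ne' s).deriv
    have hF'_le (s) : ‖deriv (fun s => ρ * Real.arctan (s / ρ)) s‖ ≤ 1 := by
      rw [hF', Real.norm_of_nonneg (by positivity)]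
      exact inv_le_one_of_one_le₀ (le_add_of_nonneg_right (sq_nonneg _))
    have hφ₂ : ContDiff ℝ 2 φ := hφ.of_le (by
      rw [List.length_cons]
      norm_cast
      omega)
    have key := norm_setIntegral_deriv_comp_mul_le_mul_rpow_div_three hab hφ₂
      (F := fun s => ρ * Real.arctan (s / ρ))
      (contDiff_const.mul (Real.contDiff_arctan.comp (contDiff_id.div_const ρ)))
      (contDiff_const (c := (1 : ℝ))) j hρ₀ hρ₁ (κ := (1 / 3 : ℝ) ^ L.length)
      (pow_le_one₀ (by norm_num) (by norm_num)) (norm_mul_arctan_div_le hρ₀.le) hF'_le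
      (hB [j, j] (by simp)) (B₀ := 1) (by simp) (B₁ := 0) (by simp [partialDeriv])
      fun τ hτ₀ hτ₁ => ih (contDiff_partialDeriv hφ (by simp) j)
        (fun L' hL' => hB (j :: L') (Nat.succ_le_succ hL')) hL hτ₀ hτ₁
    rw [hF', div_eq_mul_one_div ((1 / 3 : ℝ) ^ L.length), ← pow_succ] at key
    simp only [mul_one] at key
    refine (Real.le_norm_self _).trans (key.trans_eq ?_)
    rw [List.length_cons]
    push_cast
    ring

theorem norm_setIntegral_cexp_mul_le_of_one_le_abs (hab : a ≤ b) {ψ : (Fin (n + 1) → ℝ) → ℂ}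
    (hψ : ContDiff ℝ 1 ψ) {ξ c B B₀ B₁ : ℝ} (hξ : 1 ≤ |ξ|) (hc : 0 < c) (j : Fin (n + 1))
    (L : List (Fin (n + 1))) (hφ : ContDiff ℝ (L.length + 2) φ)
    (hB : ∀ L' : List (Fin (n + 1)), L'.length ≤ L.length + 2 → ∀ x ∈ Set.Icc a b,
      |iteratedPartialDeriv L' φ x| ≤ B)
    (hL : ∀ x ∈ Set.Icc a b, c ≤ |iteratedPartialDeriv (j :: L) φ x|)
    (hB₀ : ∀ x ∈ Set.Icc a b, ‖ψ x‖ ≤ B₀) (hB₁ : ∀ x ∈ Set.Icc a b, ‖partialDeriv j ψ x‖ ≤ B₁) :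
    ‖∫ x in Set.Icc a b, Complex.exp (Complex.I * ξ * φ x) * ψ x‖ ≤
      (B₀ * boxSurfaceArea a b + (B₁ + 2 * B * B₀) * volume.real (Set.Icc a b) +
        B₀ * ((c ^ 2)⁻¹ * volume.real (Set.Icc a b) +
          L.length * (boxSurfaceArea a b + 2 * B * volume.real (Set.Icc a b)))) *
        |ξ| ^ (-(1 / 3 : ℝ) ^ (L.length + 1)) := by
  have hξ₀ : 0 < |ξ| := one_pos.trans_le hξ
  have hF' := deriv_cexp_I_mul_div (abs_pos.1 hξ₀)
  have hF_le (s : ℝ) : ‖Complex.exp (Complex.I * ξ * s) / (Complex.I * ξ)‖ ≤ 2 * |ξ|⁻¹ := by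
    rw [norm_div, norm_cexp_I_mul_ofReal_mul_ofReal, norm_mul, Complex.norm_I, one_mul,
      Complex.norm_real, Real.norm_eq_abs, one_div]
    linarith [inv_pos.2 hξ₀]
  have key := norm_setIntegral_deriv_comp_mul_le_mul_rpow_div_three hab
    (hφ.of_le (by norm_cast; omega))
    (F := fun s : ℝ => Complex.exp (Complex.I * ξ * s) / (Complex.I * ξ))
    ((contDiff_const.mul Complex.ofRealCLM.contDiff).cexp.div_const _) hψ j
    (inv_pos.2 hξ₀) (inv_le_one_of_one_le₀ hξ) (κ := (1 / 3 : ℝ) ^ L.length)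
    (pow_le_one₀ (by norm_num) (by norm_num)) hF_le
    (fun s => by rw [hF', norm_cexp_I_mul_ofReal_mul_ofReal])
    (hB [j, j] (by simp)) hB₀ hB₁
    fun ρ hρ₀ hρ₁ => setIntegral_inv_one_add_sq_le hab hc L
      (contDiff_partialDeriv hφ (by rw [add_assoc, one_add_one_eq_two]) j)
      (fun L' hL' => hB (j :: L') (Nat.succ_le_succ hL')) hL hρ₀ hρ₁
  rwa [hF', Real.inv_rpow (abs_nonneg ξ), ← Real.rpow_neg (abs_nonneg ξ), div_eq_mul_one_div,
    ← pow_succ] at key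

theorem exists_norm_setIntegral_cexp_mul_le (hab : a ≤ b) {ψ : (Fin (n + 1) → ℝ) → ℂ}
    (hψ : ContDiff ℝ 1 ψ) {c : ℝ} (hc : 0 < c) (B : ℝ) (k : ℕ) :
    ∃ C > 0, ∀ (φ : (Fin (n + 1) → ℝ) → ℝ) (j : Fin (n + 1)) (L : List (Fin (n + 1))),
      L.length + 1 ≤ k → ContDiff ℝ (L.length + 2) φ →
      (∀ L' : List (Fin (n + 1)), L'.length ≤ L.length + 2 → ∀ x ∈ Set.Icc a b,
        |iteratedPartialDeriv L' φ x| ≤ B) →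
      (∀ x ∈ Set.Icc a b, c ≤ |iteratedPartialDeriv (j :: L) φ x|) →
      ∀ ξ : ℝ, ξ ≠ 0 →
        ‖∫ x in Set.Icc a b, Complex.exp (Complex.I * ξ * φ x) * ψ x‖ ≤
          C * |ξ| ^ (-(1 / 3 : ℝ) ^ k) := by
  obtain ⟨B₀, hB₀⟩ :=
    isCompact_Icc.exists_bound_of_continuousOn (hψ.continuous.continuousOn (s := Set.Icc a b))
  obtain ⟨B₁, hB₁⟩ := isCompact_Icc.exists_bound_of_continuousOn (s := Set.Icc a b)
    (continuous_pi fun j => (contDiff_partialDeriv hψ (zero_add 1).le j).continuous).continuousOn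
  have ha : a ∈ Set.Icc a b := Set.left_mem_Icc.2 hab
  have hB₀_nonneg : 0 ≤ B₀ := (norm_nonneg _).trans (hB₀ a ha)
  set V := volume.real (Set.Icc a b)
  set S := boxSurfaceArea a b
  have hS : 0 ≤ S := boxSurfaceArea_nonneg
  let C (l : ℝ) := B₀ * S + (B₁ + 2 * B * B₀) * V + B₀ * ((c ^ 2)⁻¹ * V + l * (S + 2 * B * V))
  refine ⟨max 1 (max (B₀ * V) (C k)), by positivity, fun φ j L hk hφ hB hL ξ hξ => ?_⟩
  have hB_nonneg : 0 ≤ B := (abs_nonneg _).trans (hB [] (Nat.zero_le _) a ha)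
  have hξ₀ : 0 < |ξ| := abs_pos.2 hξ
  rcases le_total |ξ| 1 with hξ₁ | hξ₁
  · have hrpow : 1 ≤ |ξ| ^ (-(1 / 3 : ℝ) ^ k) :=
      Real.one_le_rpow_of_pos_of_le_one_of_nonpos hξ₀ hξ₁ (neg_nonpos.2 (by positivity))
    calc _ ≤ B₀ * V := norm_setIntegral_cexp_mul_le isCompact_Icc.measure_lt_top hB₀ ξ
      _ ≤ max 1 (max (B₀ * V) (C k)) := (le_max_left _ _).trans (le_max_right _ _)
      _ ≤ _ := le_mul_of_one_le_right (by positivity) hrpow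
  · have hrpow : |ξ| ^ (-(1 / 3 : ℝ) ^ (L.length + 1)) ≤ |ξ| ^ (-(1 / 3 : ℝ) ^ k) :=
      Real.rpow_le_rpow_of_exponent_le hξ₁
        (neg_le_neg (pow_le_pow_of_le_one (by norm_num) (by norm_num) hk))
    have hCL : C L.length ≤ C k := by
      simp only [C]
      gcongr
      omega
    calc _ ≤ C L.length * |ξ| ^ (-(1 / 3 : ℝ) ^ (L.length + 1)) :=
          norm_setIntegral_cexp_mul_le_of_one_le_abs hab hψ hξ₁ hc j L hφ hB hL hB₀
            fun x hx => (norm_le_pi_norm _ j).trans (hB₁ x hx)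
      _ ≤ max 1 (max (B₀ * V) (C k)) * |ξ| ^ (-(1 / 3 : ℝ) ^ k) := by
          gcongr
          exact hCL.trans ((le_max_right _ _).trans (le_max_right _ _))

end Box

theorem exists_norm_setIntegral_cexp_mvPolynomial_eval_mul_le {n : ℕ} {a b : Fin n → ℝ}
    (hab : a ≤ b) {ψ : (Fin n → ℝ) → ℂ} (hψ : ContDiff ℝ 1 ψ) {c : ℝ} (hc : 0 < c) (D : ℕ)
    (M : ℝ) :
    ∃ C > 0, ∀ Q : MvPolynomial (Fin n) ℝ, Q.totalDegree ≤ D → (∀ m, |Q.coeff m| ≤ M) →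
      (∃ L : List (Fin n), 1 ≤ L.length ∧ L.length ≤ D ∧ ∀ t ∈ Set.Icc a b,
        c ≤ |MvPolynomial.eval t (L.foldl (fun R i => MvPolynomial.pderiv i R) Q)|) →
      ∀ ξ : ℝ, ξ ≠ 0 →
        ‖∫ t in Set.Icc a b,
            Complex.exp (Complex.I * ξ * (MvPolynomial.eval t Q : ℝ)) * ψ t‖ ≤
          C * |ξ| ^ (-(1 / 3 : ℝ) ^ D) := by
  obtain ⟨B, hB⟩ := exists_abs_iteratedPartialDeriv_mvPolynomial_eval_le
    (isCompact_Icc (a := a) (b := b)) D (D + 1) M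
  rcases n with _ | n
  · refine ⟨1, one_pos, ?_⟩
    rintro Q - - ⟨_ | ⟨i, L⟩, hL, -⟩
    exacts [absurd hL (by simp), i.elim0]
  obtain ⟨C, hC, hbound⟩ := exists_norm_setIntegral_cexp_mul_le hab hψ hc B D
  refine ⟨C, hC, ?_⟩
  rintro Q hQ hM ⟨_ | ⟨j, L⟩, hL, hLD, hcL⟩ ξ hξ
  · exact absurd hL (by simp)
  · refine hbound _ j L hLD (contDiff_mvPolynomial_eval Q)
      (fun L' hL' => hB Q hQ hM L' (hL'.trans (Nat.succ_le_succ hLD))) ?_ ξ hξ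
    rwa [iteratedPartialDeriv_mvPolynomial_eval]

theorem contDiff_ofReal_prod_apply {ι : Type*} [Fintype ι] {k : WithTop ℕ∞} {η : ℝ → ℝ}
    (hη : ContDiff ℝ k η) : ContDiff ℝ k fun t : ι → ℝ => ((∏ i, η (t i) : ℝ) : ℂ) :=
  Complex.ofRealCLM.contDiff.comp (contDiff_prod fun i _ => hη.comp (contDiff_apply ℝ ℝ i))

theorem stmt15_general {n : ℕ} {a b : Fin n → ℝ} (hab : a ≤ b) {ψ : (Fin n → ℝ) → ℂ}
    (hψ : ContDiff ℝ 1 ψ) {c : ℝ} (hc : 0 < c) (D : ℕ) (M : ℝ) :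
    ∃ C > 0, ∀ Q₁ Q₂ : MvPolynomial (Fin n) ℝ,
      Q₁.totalDegree ≤ D → Q₂.totalDegree ≤ D →
      (∀ m, |Q₁.coeff m| ≤ M) → (∀ m, |Q₂.coeff m| ≤ M) →
      (∃ L : List (Fin n), 1 ≤ L.length ∧ L.length ≤ D ∧
        ∀ t ∈ Set.univ.pi fun i => Set.Icc (a i) (b i),
          c ≤ |MvPolynomial.eval t (L.foldl (fun R i => MvPolynomial.pderiv i R) Q₁)|) →
      (∃ L : List (Fin n), 1 ≤ L.length ∧ L.length ≤ D ∧
        ∀ t ∈ Set.univ.pi fun i => Set.Icc (a i) (b i),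
          c ≤ |MvPolynomial.eval t (L.foldl (fun R i => MvPolynomial.pderiv i R) Q₂)|) →
      ∀ ξ : ℝ, ξ ≠ 0 →
        ‖∫ t in Set.univ.pi fun i => Set.Icc (a i) (b i),
            (Complex.exp (Complex.I * ξ * (MvPolynomial.eval t Q₁ : ℝ)) -
              Complex.exp (Complex.I * ξ * (MvPolynomial.eval t Q₂ : ℝ))) * ψ t‖ ≤
          C * |ξ| ^ (-(1 / 3 : ℝ) ^ D) := by
  simp only [Set.pi_univ_Icc]
  obtain ⟨C, hC, hbound⟩ := exists_norm_setIntegral_cexp_mvPolynomial_eval_mul_le hab hψ hc D M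
  refine ⟨C + C, add_pos hC hC, fun Q₁ Q₂ hD₁ hD₂ hM₁ hM₂ hL₁ hL₂ ξ hξ => ?_⟩
  have hint (Q : MvPolynomial (Fin n) ℝ) : IntegrableOn
      (fun t => Complex.exp (Complex.I * ξ * (MvPolynomial.eval t Q : ℝ)) * ψ t)
      (Set.Icc a b) := by
    have hQ := (contDiff_mvPolynomial_eval (k := 0) Q).continuous
    have hψ_cont := hψ.continuous
    exact (by fun_prop : Continuous _).integrableOn_Icc
  simp only [sub_mul]
  rw [integral_sub (hint Q₁) (hint Q₂), add_mul]
  exact (norm_sub_le _ _).trans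
    (add_le_add (hbound Q₁ hD₁ hM₁ hL₁ ξ hξ) (hbound Q₂ hD₂ hM₂ hL₂ ξ hξ))

/-- Van der Corput-type decay: if `Q₁, Q₂` are polynomials of degree at most `D` with
coefficients bounded by `M` and some iterated partial derivative (of order between 1
and `D`) of each is bounded below by `c` on `[1/2,4]ⁿ`, then the oscillatory integral
`∫ (e^{iξQ₁(t)} − e^{iξQ₂(t)}) η(t₁)⋯η(tₙ) dt` is `O(|ξ|^{-ε})`, with constants
depending only on `n, D, M, c, η`. -/
theorem stmt15 (n D : ℕ) (M c : ℝ) (hD : 1 ≤ D) (hM : 0 < M) (hc : 0 < c)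
    (η : ℝ → ℝ) (hηsupp : Function.support η ⊆ Set.Icc (1/2 : ℝ) 4)
    (hηsm : ContDiff ℝ (⊤ : ℕ∞) η) (hη1 : ∀ s ∈ Set.Icc (1:ℝ) 2, η s = 1) :
    ∃ C > (0:ℝ), ∃ ε > (0:ℝ), ∀ Q₁ Q₂ : MvPolynomial (Fin n) ℝ,
      Q₁.totalDegree ≤ D → Q₂.totalDegree ≤ D →
      (∀ m, |Q₁.coeff m| ≤ M) → (∀ m, |Q₂.coeff m| ≤ M) →
      (∃ L : List (Fin n), 1 ≤ L.length ∧ L.length ≤ D ∧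
        (∀ t ∈ Set.univ.pi (fun _ : Fin n => Set.Icc (1/2 : ℝ) 4),
          c ≤ |MvPolynomial.eval t (L.foldl (fun R i => MvPolynomial.pderiv i R) Q₁)|) ∧
        (∀ t ∈ Set.univ.pi (fun _ : Fin n => Set.Icc (1/2 : ℝ) 4),
          c ≤ |MvPolynomial.eval t (L.foldl (fun R i => MvPolynomial.pderiv i R) Q₂)|)) →
      ∀ ξ : ℝ, ξ ≠ 0 →
        ‖∫ t in Set.univ.pi (fun _ : Fin n => Set.Icc (1/2 : ℝ) 4),
            (Complex.exp (Complex.I * (ξ : ℂ) * (MvPolynomial.eval t Q₁ : ℂ)) -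
              Complex.exp (Complex.I * (ξ : ℂ) * (MvPolynomial.eval t Q₂ : ℂ))) *
            ((∏ i, η (t i) : ℝ) : ℂ)‖
          ≤ C * |ξ| ^ (-ε) := by
  obtain ⟨C, hC, hbound⟩ := stmt15_general (a := fun _ => 1 / 2) (b := fun _ => 4)
    (fun _ => by norm_num) (contDiff_ofReal_prod_apply (hηsm.of_le (mod_cast le_top))) hc D M
  exact ⟨C, hC, (1 / 3) ^ D, by positivity,
    fun Q₁ Q₂ hD₁ hD₂ hM₁ hM₂ ⟨L, hL, hLD, hL₁, hL₂⟩ =>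
      hbound Q₁ Q₂ hD₁ hD₂ hM₁ hM₂ ⟨L, hL, hLD, hL₁⟩ ⟨L, hL, hLD, hL₂⟩⟩
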